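/- Let n, N ≥ 1 be integers, r ≥ 1 an integer, and 0 ≤ k ≤ N. Then ℙ(μ_r(n,N) = k) = C(N,k)·p_r^k·(1-p_r)^{N-k}·ℙ(ζ_{N-k}^{(r)} = n - kr)/ℙ(ζ_N = n), where C(N,k) is the binomial coefficient (and where, for k·r > n, both sides are zero). -/

import Mathlib

open MeasureTheory ProbabilityTheory Finset
open scoped ProbabilityTheory

/-- The law of `n` balls placed independently and uniformly at random into `N` boxes. -/
noncomputable def ballsInBoxes (n N : ℕ) : Measure (Fin n → Fin N) :=
  Measure.pi fun _ : Fin n => ((N : ENNReal)⁻¹ • (Measure.count : Measure (Fin N)))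

/-- The probability that a sum of `m` i.i.d. `Poisson(α)` random variables equals `l`,
i.e. `ℙ(ζ_m = l)`. -/
noncomputable def poissonSumProb (α : NNReal) (m l : ℕ) : ℝ :=
  ((Measure.pi fun _ : Fin m => poissonMeasure α) {x : Fin m → ℕ | ∑ i, x i = l}).toReal

/-- The probability that a sum of `m` i.i.d. random variables, each distributed as a `Poisson(α)`
variable conditioned on being `≠ r`, equals `l ∈ ℤ`, i.e. `ℙ(ζ_m^{(r)} = l)`. -/
noncomputable def condPoissonSumProb (α : NNReal) (r : ℕ) (m : ℕ) (l : ℤ) : ℝ :=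
  ((Measure.pi fun _ : Fin m => (poissonMeasure α)[|{r}ᶜ])
      {x : Fin m → ℕ | (∑ i, (x i : ℤ)) = l}).toReal

/-!
If the `N` boxes receive independent Poisson numbers of balls, then, whatever the rate,
conditioning on the total being `n` gives the law of the occupancy numbers of `n` balls thrown
uniformly: this is the multinomial theorem. Hence `ℙ(μ_r = k)` is the probability that exactly `k`
of `N` i.i.d. Poisson variables equal `r` and that all of them sum to `n`, divided by the
probability of the latter. In the numerator, choose the `k` variables that equal `r`; the other
`N - k` remain independent, are conditioned to differ from `r`, and have to sum to `n - k * r`.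
-/

section Occupancy

variable {σ ι : Type*} [Fintype σ] [DecidableEq ι]

/-- The occupancy vector of an allocation `X` of balls (indexed by `σ`) to boxes (indexed by `ι`):
the number of balls in each box. Kolchin's `μ_r` is the number of its entries equal to `r`. -/
def occupancy (X : σ → ι) (i : ι) : ℕ := #{s | X s = i}

variable [Fintype ι]

lemma sum_occupancy (X : σ → ι) : ∑ i, occupancy X i = Fintype.card σ := by
  simp [occupancy, sum_card_fiberwise_eq_card_filter]

lemma prod_comp_eq_prod_pow_occupancy {M : Type*} [CommMonoid M] (f : ι → M) (X : σ → ι) :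
    ∏ s, f (X s) = ∏ i, f i ^ occupancy X i := by
  simp only [occupancy, ← prod_const, prod_fiberwise']

-- Both sides are the coefficient of `∏ i, X i ^ c i` in `(∑ i, X i) ^ card σ`.
lemma card_filter_occupancy_eq [DecidableEq σ] {c : ι → ℕ} (hc : ∑ i, c i = Fintype.card σ) :
    #{X : σ → ι | occupancy X = c} = Nat.multinomial univ c := by
  have prod_X_pow (d : ι → ℕ) : ∏ i, (MvPolynomial.X i : MvPolynomial ι ℕ) ^ d i
      = MvPolynomial.monomial (Finsupp.equivFunOnFinite.symm d) 1 := by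
    rw [MvPolynomial.monomial_eq, Finsupp.prod_fintype _ _ fun _ => pow_zero _]
    simp
  have expansion : ∑ X : σ → ι, ∏ i, (MvPolynomial.X i : MvPolynomial ι ℕ) ^ occupancy X i
      = ∑ d ∈ piAntidiag univ (Fintype.card σ),
        Nat.multinomial univ d • ∏ i, (MvPolynomial.X i : MvPolynomial ι ℕ) ^ d i := by
    simp only [← prod_comp_eq_prod_pow_occupancy, nsmul_eq_mul]
    rw [← sum_pow_eq_sum_piAntidiag, ← card_univ, ← prod_const, prod_univ_sum,
      Fintype.piFinset_univ]
  have coeff_eq := congrArg (MvPolynomial.coeff (Finsupp.equivFunOnFinite.symm c)) expansion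
  simp only [prod_X_pow, MvPolynomial.coeff_sum, MvPolynomial.coeff_smul,
    MvPolynomial.coeff_monomial, Finsupp.equivFunOnFinite.symm.injective.eq_iff] at coeff_eq
  rw [card_filter, coeff_eq]
  simp [hc]

end Occupancy

section BallsInBoxes

variable {n N : ℕ} [NeZero N]

instance : IsProbabilityMeasure ((N : ENNReal)⁻¹ • (Measure.count : Measure (Fin N))) :=
  ⟨by simp [ENNReal.inv_mul_cancel, NeZero.ne]⟩

instance : IsProbabilityMeasure (ballsInBoxes n N) := by
  unfold ballsInBoxes; infer_instance

lemma ballsInBoxes_real_coe (A : Finset (Fin n → Fin N)) :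
    (ballsInBoxes n N).real A = #A * (N : ℝ)⁻¹ ^ n := by
  rw [← sum_measureReal_singleton, ballsInBoxes]
  simp [Measure.real]

lemma ballsInBoxes_map_occupancy_real_singleton (c : Fin N → ℕ) :
    ((ballsInBoxes n N).map occupancy).real {c}
      = if ∑ i, c i = n then (Nat.multinomial univ c : ℝ) * (N : ℝ)⁻¹ ^ n else 0 := by
  rw [map_measureReal_apply .of_discrete (measurableSet_singleton c)]
  split_ifs with hc
  · have preimage_eq : occupancy ⁻¹' {c}
        = (({X | occupancy X = c} : Finset (Fin n → Fin N)) : Set (Fin n → Fin N)) := by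
      ext; simp
    rw [preimage_eq, ballsInBoxes_real_coe, card_filter_occupancy_eq (by simpa using hc)]
  · have preimage_eq : occupancy ⁻¹' {c} = (∅ : Set (Fin n → Fin N)) := by
      ext X
      simpa using fun h : occupancy X = c => hc (by simpa [h] using sum_occupancy X)
    rw [preimage_eq, measureReal_empty]

end BallsInBoxes

section Poissonization

lemma pi_poissonMeasure_real_singleton {ι : Type*} [Fintype ι] (α : NNReal) (c : ι → ℕ) :
    (Measure.pi fun _ : ι => poissonMeasure α).real {c}
      = Real.exp (-(Fintype.card ι * α)) * α ^ (∑ i, c i) * Nat.multinomial univ c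
        / (∑ i, c i).factorial := by
  have multinomial_spec : (∏ i, ((c i).factorial : ℝ)) * Nat.multinomial univ c
      = (∑ i, c i).factorial := mod_cast Nat.multinomial_spec univ c
  have pi_singleton : (Measure.pi fun _ : ι => poissonMeasure α).real {c}
      = ∏ i, (poissonMeasure α).real {c i} := by
    simp [Measure.real, ENNReal.toReal_prod]
  simp only [pi_singleton, poissonMeasure_real_singleton, prod_div_distrib, prod_mul_distrib,
    prod_pow_eq_pow_sum, prod_const, card_univ, ← Real.exp_nat_mul, mul_neg]
  rw [← multinomial_spec, mul_div_mul_right]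
  exact_mod_cast (Nat.multinomial_pos univ c).ne'

variable (α : NNReal) (n N : ℕ) [NeZero N]

lemma pi_poissonMeasure_restrict_sum_eq :
    (Measure.pi fun _ : Fin N => poissonMeasure α).restrict {x | ∑ i, x i = n}
      = poissonMeasure (N * α) {n} • (ballsInBoxes n N).map occupancy := by
  have : IsProbabilityMeasure ((ballsInBoxes n N).map occupancy) :=
    Measure.isProbabilityMeasure_map .of_discrete
  have : IsFiniteMeasure (poissonMeasure (N * α) {n} • (ballsInBoxes n N).map occupancy) :=
    Measure.smul_finite _ (measure_ne_top _ _)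
  refine Measure.ext_of_measureReal_singleton fun c => ?_
  rw [measureReal_ennreal_smul_apply, ← Measure.real, poissonMeasure_real_singleton,
    ballsInBoxes_map_occupancy_real_singleton, measureReal_restrict_apply .of_discrete]
  split_ifs with hc
  · have hN : (N : ℝ) ≠ 0 := NeZero.ne _
    rw [Set.inter_eq_left.mpr (by simpa using hc), pi_poissonMeasure_real_singleton, hc]
    simp only [Fintype.card_fin, NNReal.coe_mul, NNReal.coe_natCast, mul_pow, inv_pow]
    field_simp
  · rw [Set.singleton_inter_eq_empty.mpr (by simpa using hc), measureReal_empty, mul_zero]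

lemma pi_poissonMeasure_sum_eq :
    (Measure.pi fun _ : Fin N => poissonMeasure α) {x | ∑ i, x i = n}
      = poissonMeasure (N * α) {n} := by
  have : IsProbabilityMeasure ((ballsInBoxes n N).map occupancy) :=
    Measure.isProbabilityMeasure_map .of_discrete
  simpa using congrArg (· Set.univ) (pi_poissonMeasure_restrict_sum_eq α n N)

variable {α}

lemma cond_sum_eq_pi_poissonMeasure (hα : 0 < α) :
    (Measure.pi fun _ : Fin N => poissonMeasure α)[|{x | ∑ i, x i = n}]
      = (ballsInBoxes n N).map occupancy := by
  have mass_ne_zero : poissonMeasure (N * α) {n} ≠ 0 := fun h =>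
    (poissonMeasure_real_singleton_pos n (r := N * α)
      (mul_pos (mod_cast NeZero.pos N) hα)).ne' (by simp [Measure.real, h])
  rw [ProbabilityTheory.cond, pi_poissonMeasure_restrict_sum_eq, pi_poissonMeasure_sum_eq,
    smul_smul, ENNReal.inv_mul_cancel mass_ne_zero (measure_ne_top _ _), one_smul]

end Poissonization

section PiMeasure

lemma pi_restrict_pi_eq_prod_smul_pi_cond {ι : Type*} [Fintype ι] {E : ι → Type*}
    [∀ i, MeasurableSpace (E i)] (μ : ∀ i, Measure (E i)) [∀ i, IsFiniteMeasure (μ i)]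
    {A : ∀ i, Set (E i)} (hA : ∀ i, MeasurableSet (A i)) :
    (Measure.pi μ).restrict (Set.univ.pi A)
      = (∏ i, μ i (A i)) • Measure.pi fun i => (μ i)[|A i] := by
  rw [Measure.restrict_pi_pi]
  refine Measure.pi_eq fun t ht => ?_
  simp only [Measure.smul_apply, Measure.pi_pi, smul_eq_mul, ← prod_mul_distrib]
  refine prod_congr rfl fun i _ => ?_
  rw [Measure.restrict_apply (ht i), Set.inter_comm, mul_comm, cond_mul_eq_inter (hA i)]

variable {ι κ E M : Type*} [Fintype ι] [Fintype κ] [MeasurableSpace E] (μ : Measure E)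
  [IsFiniteMeasure μ]

lemma pi_sum_eq_of_equiv [AddCommMonoid M] (e : ι ≃ κ) (f : E → M) (l : M) :
    Measure.pi (fun _ : ι => μ) {x | ∑ i, f (x i) = l}
      = Measure.pi (fun _ : κ => μ) {y | ∑ j, f (y j) = l} := by
  rw [← (measurePreserving_piCongrLeft (fun _ : κ => μ) e).measure_preimage_equiv]
  congr! 3 with x
  simp [← e.sum_comp, MeasurableEquiv.coe_piCongrLeft, Equiv.piCongrLeft_apply_apply]

variable [AddCommGroup M] (f : E → M) {a : E}

lemma pi_forall_ne_and_sum_eq (ha : MeasurableSet {a}) (l : M) :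
    Measure.pi (fun _ : ι => μ) {x | (∀ i, x i ≠ a) ∧ ∑ i, f (x i) = l}
      = μ {a}ᶜ ^ Fintype.card ι * Measure.pi (fun _ : ι => μ[|{a}ᶜ]) {x | ∑ i, f (x i) = l} := by
  have inter_eq : {x : ι → E | (∀ i, x i ≠ a) ∧ ∑ i, f (x i) = l}
      = {x | ∑ i, f (x i) = l} ∩ Set.univ.pi fun _ => {a}ᶜ := by
    ext; simp [and_comm]
  rw [inter_eq, ← Measure.restrict_apply' (.univ_pi fun _ => ha.compl),
    pi_restrict_pi_eq_prod_smul_pi_cond _ fun _ => ha.compl]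
  simp

lemma pi_forall_eq_iff_and_sum_eq (p : ι → Prop) [DecidablePred p] (l : M) :
    Measure.pi (fun _ : ι => μ) {x | (∀ i, x i = a ↔ p i) ∧ ∑ i, f (x i) = l}
      = μ {a} ^ #{i | p i} * Measure.pi (fun _ : {i // ¬p i} => μ)
          {y | (∀ i, y i ≠ a) ∧ ∑ i, f (y i) = l - #{i | p i} • f a} := by
  have preimage_eq : {x : ι → E | (∀ i, x i = a ↔ p i) ∧ ∑ i, f (x i) = l}
      = MeasurableEquiv.piEquivPiSubtypeProd (fun _ => E) p ⁻¹'
        ((Set.univ.pi fun _ => {a}) ×ˢ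
          {y | (∀ i, y i ≠ a) ∧ ∑ i, f (y i) = l - #{i | p i} • f a}) := by
    ext x
    have eq_iff : (∀ i, x i = a ↔ p i)
        ↔ (∀ i : {i // p i}, x i = a) ∧ ∀ i : {i // ¬p i}, x i ≠ a := by
      simp [iff_def, forall_and, and_comm, not_imp_not]
    have sum_eq (h : ∀ i : {i // p i}, x i = a) :
        ∑ i, f (x i) = #{i | p i} • f a + ∑ i : {i // ¬p i}, f (x i) := by
      rw [← Fintype.sum_subtype_add_sum_subtype p]
      simp [h, Fintype.card_subtype]
    simp only [Set.mem_ofPred_eq, Set.mem_preimage, Set.mem_prod, Set.mem_univ_pi, eq_iff,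
      and_assoc]
    refine and_congr_right fun h => and_congr_right fun _ => ?_
    rw [sum_eq h, eq_sub_iff_add_eq']
    rfl
  rw [preimage_eq, (measurePreserving_piEquivPiSubtypeProd (fun _ => μ) p).measure_preimage_equiv,
    Measure.prod_prod, Measure.pi_pi]
  simp [Fintype.card_subtype]

lemma measure_card_filter_eq_and [DecidableEq E] (ν : Measure (ι → E)) (ha : MeasurableSet {a})
    (k : ℕ) (q : (ι → E) → Prop) :
    ν {x | #{i | x i = a} = k ∧ q x}
      = ∑ S ∈ powersetCard k univ, ν {x | (∀ i, x i = a ↔ i ∈ S) ∧ q x} := by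
  have fiber_eq (S : Finset ι) :
      (fun x : ι → E => ({i | x i = a} : Finset ι)) ⁻¹' {S} = {x | ∀ i, x i = a ↔ i ∈ S} := by
    ext; simp [Finset.ext_iff]
  have measurable_fiber (S : Finset ι) : MeasurableSet {x : ι → E | ∀ i, x i = a ↔ i ∈ S} := by
    rw [Set.ofPred_forall]
    refine .iInter fun i => ?_
    have eval : Measurable fun x : ι → E => x i := measurable_pi_apply i
    by_cases h : i ∈ S
    · simp only [h, iff_true]
      exact eval ha
    · simp only [h, iff_false]
      exact eval ha.compl
  have fiber_inter_eq (S : Finset ι) : {x : ι → E | (∀ i, x i = a ↔ i ∈ S) ∧ q x}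
      = {x | ∀ i, x i = a ↔ i ∈ S} ∩ {x | q x} := rfl
  have union_eq : {x : ι → E | #{i | x i = a} = k ∧ q x}
      = (⋃ S ∈ powersetCard k univ, {x | ∀ i, x i = a ↔ i ∈ S}) ∩ {x | q x} := by
    simp only [← fiber_eq, Finset.set_biUnion_preimage_singleton]
    ext; simp
  have disjoint_fibers :
      ((powersetCard k univ : Finset (Finset ι)) : Set (Finset ι)).PairwiseDisjoint
        fun S => {x : ι → E | ∀ i, x i = a ↔ i ∈ S} := by
    simpa only [fiber_eq] using
      Set.pairwiseDisjoint_fiber (fun x : ι → E => ({i | x i = a} : Finset ι)) _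
  simp only [union_eq, fiber_inter_eq, ← Measure.restrict_apply (measurable_fiber _)]
  rw [← Measure.restrict_apply (measurableSet_biUnion _ fun S _ => measurable_fiber S),
    measure_biUnion_finset disjoint_fibers fun S _ => measurable_fiber S]

lemma pi_card_filter_eq_and_sum_eq [DecidableEq E] (ha : MeasurableSet {a}) {N : ℕ}
    (hN : Fintype.card ι = N) (k : ℕ) (l : M) :
    Measure.pi (fun _ : ι => μ) {x | #{i | x i = a} = k ∧ ∑ i, f (x i) = l}
      = N.choose k * μ {a} ^ k * μ {a}ᶜ ^ (N - k)
        * Measure.pi (fun _ : Fin (N - k) => μ[|{a}ᶜ])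
            {y | ∑ i, f (y i) = l - k • f a} := by
  classical
  have fiber_prob (S : Finset ι) (hS : S ∈ powersetCard k univ) :
      Measure.pi (fun _ : ι => μ) {x | (∀ i, x i = a ↔ i ∈ S) ∧ ∑ i, f (x i) = l}
        = μ {a} ^ k * μ {a}ᶜ ^ (N - k)
          * Measure.pi (fun _ : Fin (N - k) => μ[|{a}ᶜ])
            {y | ∑ i, f (y i) = l - k • f a} := by
    obtain rfl : #S = k := (mem_powersetCard.mp hS).2
    have card_compl : Fintype.card {i // i ∉ S} = N - #S := by simp [hN]
    rw [pi_forall_eq_iff_and_sum_eq, pi_forall_ne_and_sum_eq _ _ ha, card_compl,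
      pi_sum_eq_of_equiv _ (Fintype.equivFinOfCardEq card_compl), filter_univ_mem, mul_assoc]
  rw [measure_card_filter_eq_and _ ha, sum_congr rfl fiber_prob, sum_const, card_powersetCard,
    card_univ, hN, nsmul_eq_mul, mul_assoc, mul_assoc, mul_assoc]

end PiMeasure

section Kolchin

variable {α : NNReal}

lemma ballsInBoxes_real_preimage_occupancy (hα : 0 < α) {n N : ℕ} [NeZero N]
    (A : Set (Fin N → ℕ)) :
    (ballsInBoxes n N).real (occupancy ⁻¹' A)
      = (Measure.pi fun _ : Fin N => poissonMeasure α).real (A ∩ {c | ∑ i, c i = n})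
        / poissonSumProb α N n := by
  rw [← map_measureReal_apply .of_discrete .of_discrete, ← cond_sum_eq_pi_poissonMeasure n N hα,
    Measure.real, cond_apply .of_discrete, ENNReal.toReal_mul, ENNReal.toReal_inv, Set.inter_comm,
    inv_mul_eq_div]
  rfl

lemma pi_poissonMeasure_real_card_filter_eq_inter_sum_eq (n N r k : ℕ) :
    (Measure.pi fun _ : Fin N => poissonMeasure α).real
        ({c | #{i | c i = r} = k} ∩ {c | ∑ i, c i = n})
      = N.choose k * (poissonMeasure α).real {r} ^ k * (1 - (poissonMeasure α).real {r}) ^ (N - k)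
        * condPoissonSumProb α r (N - k) (n - k * r) := by
  have exactly_k := pi_card_filter_eq_and_sum_eq (ι := Fin N) (poissonMeasure α)
    (fun m : ℕ => (m : ℤ)) (measurableSet_singleton r) (Fintype.card_fin N) k n
  have sum_cast_eq_iff (c : Fin N → ℕ) : ∑ i, (c i : ℤ) = n ↔ ∑ i, c i = n := by norm_cast
  simp only [sum_cast_eq_iff, nsmul_eq_mul] at exactly_k
  rw [← probReal_compl_eq_one_sub (measurableSet_singleton r), Measure.real,
    ← Set.ofPred_and, exactly_k]
  simp [condPoissonSumProb, Measure.real]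

end Kolchin

theorem kolchin_exact_formula_general (α : NNReal) (hα : 0 < α) (n N r k : ℕ) (hN : N ≠ 0) :
    ((ballsInBoxes n N) {X : Fin n → Fin N |
        (Finset.univ.filter fun i : Fin N =>
          (Finset.univ.filter fun s : Fin n => X s = i).card = r).card = k}).toReal
      = (N.choose k : ℝ) * ((α : ℝ) ^ r * Real.exp (-α) / r.factorial) ^ k
          * (1 - (α : ℝ) ^ r * Real.exp (-α) / r.factorial) ^ (N - k)
          * condPoissonSumProb α r (N - k) ((n : ℤ) - k * r)
          / poissonSumProb α N n := by
  have : NeZero N := ⟨hN⟩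
  have p_r : (poissonMeasure α).real {r} = (α : ℝ) ^ r * Real.exp (-α) / r.factorial := by
    rw [poissonMeasure_real_singleton, mul_comm (Real.exp _)]
  rw [← p_r, ← pi_poissonMeasure_real_card_filter_eq_inter_sum_eq]
  exact ballsInBoxes_real_preimage_occupancy hα {c | #{i | c i = r} = k}

/-- Kolchin's exact formula:
`ℙ(μ_r(n,N) = k) = C(N,k)·p_r^k·(1-p_r)^{N-k}·ℙ(ζ_{N-k}^{(r)} = n-kr)/ℙ(ζ_N = n)`,
where `μ_r(n,N)` is the number of boxes containing exactly `r` of `n` balls placed independently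
and uniformly at random into `N` boxes, `α = n/N`, and `p_r = α^r e^{-α}/r!`. -/
theorem kolchin_exact_formula (n N r k : ℕ) (hn : 1 ≤ n) (hN : 1 ≤ N) (hr : 1 ≤ r)
    (hk : k ≤ N) :
    ((ballsInBoxes n N) {X : Fin n → Fin N |
        (Finset.univ.filter fun i : Fin N =>
          (Finset.univ.filter fun s : Fin n => X s = i).card = r).card = k}).toReal
      = (N.choose k : ℝ) * (((n : ℝ) / N) ^ r * Real.exp (-((n : ℝ) / N)) / r.factorial) ^ k
          * (1 - ((n : ℝ) / N) ^ r * Real.exp (-((n : ℝ) / N)) / r.factorial) ^ (N - k)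
          * condPoissonSumProb ((n : NNReal) / N) r (N - k) ((n : ℤ) - k * r)
          / poissonSumProb ((n : NNReal) / N) N n := by
  simpa using kolchin_exact_formula_general (n / N) (by positivity) n N r k (by omega)
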